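/- In a variable-regular Tanner graph with column weight 3, girth 8, and all cycles of length up to 12 chordless, every (a,b) elementary trapping set with b < a satisfies: a ≥ 10 if b = 0, a ≥ 9 if b = 1, a ≥ 8 if b = 2, and a ≥ 5 if b = 3. -/

import Mathlib

open SimpleGraph Finset

/-- A cycle (given as a closed walk) in a graph has a chord if either there is an
edge of the graph between two vertices of the cycle that is not an edge of the cycle,
or there is a vertex outside the cycle adjacent to two distinct vertices of the cycle. -/
def HasChord {V : Type*} (G : SimpleGraph V) {v : V} (c : G.Walk v v) : Prop :=
  (∃ x ∈ c.support, ∃ y ∈ c.support, G.Adj x y ∧ s(x, y) ∉ c.edges) ∨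
  (∃ w, w ∉ c.support ∧ ∃ x ∈ c.support, ∃ y ∈ c.support, x ≠ y ∧ G.Adj w x ∧ G.Adj w y)

/-!
Join two variable nodes of the trapping set when they share a check node. Girth 8 makes this graph
simple, triangle-free and of maximum degree 3, with degree sum `3 * a - b`; an edge of it is a path
of length two in the Tanner graph, so a chord of a 6-cycle would be a chord of a 12-cycle.

Let `v` have degree 3. If two pairs of its neighbours had different further common neighbours, a
hexagon through `v` would have a chord. So the second neighbourhoods overlap only a little, and
counting the vertices at distance at most two of `v` bounds the degree sum over the neighbours of
`v` by `a + 1`. That sum is `9` up to the deficiency `b`, hence `8 ≤ a + b`. If `b` is 1 or 2,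
choosing `v` not adjacent to some vertex of degree less than 3 and adding that vertex to the
neighbours of `v` improves this to `9 ≤ a + b`. If `b = 0`, then `a = 8` would force two vertices to
have the same neighbours, and the three vertices outside the resulting complete bipartite graph
would form a triangle. Finally `a` and `b` have the same parity, which turns 9 into 10.
-/

section VariableGraph

variable {V : Type*} {G : SimpleGraph V} {S : Finset V}

/-- The variable-node graph of a set `S` of variable nodes: two of them are joined when some check
node is adjacent to both. -/
def variableGraph (G : SimpleGraph V) (S : Finset V) : SimpleGraph S where
  Adj u v := u ≠ v ∧ ∃ w, G.Adj w u ∧ G.Adj w v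
  symm := ⟨fun _ _ h => ⟨h.1.symm, h.2.imp fun _ => And.symm⟩⟩
  loopless := ⟨fun _ h => h.1 rfl⟩

lemma variableGraph_adj {u v : S} :
    (variableGraph G S).Adj u v ↔ u ≠ v ∧ ∃ w, G.Adj w u ∧ G.Adj w v :=
  .rfl

lemma notMem_of_adj_of_isIndepSet {X : Set V} (hind : G.IsIndepSet X) {w v : V} (hv : v ∈ X)
    (hwv : G.Adj w v) : w ∉ X :=
  fun hw => hind hw hv hwv.ne hwv

/-- The walk `q` of `G` lifts the walk `p` of the variable-node graph: it visits the same variable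
nodes, with a check node inserted into each edge of `p`. -/
structure IsLift {u v : S} (p : (variableGraph G S).Walk u v) (q : G.Walk (u : V) v) : Prop where
  length_eq : q.length = 2 * p.length
  mem_support_iff : ∀ x : S, (x : V) ∈ q.support ↔ x ∈ p.support
  exists_mem_edges : ∀ w ∈ q.support, w ∉ S → ∃ e ∈ p.edges, ∀ x ∈ e, G.Adj w x

lemma IsLift.nil (u : S) : IsLift (.nil : (variableGraph G S).Walk u u) .nil where
  length_eq := rfl
  mem_support_iff x := by simp
  exists_mem_edges w hw hwS := by
    rw [Walk.support_nil, List.mem_singleton] at hw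
    exact absurd (hw ▸ u.2) hwS

lemma IsLift.cons {u v x : S} {p : (variableGraph G S).Walk v x} {q : G.Walk (v : V) x}
    (hpq : IsLift p q) (huv : (variableGraph G S).Adj u v) {w : V} (hwS : w ∉ S)
    (hwu : G.Adj w u) (hwv : G.Adj w v) :
    IsLift (.cons huv p) (.cons hwu.symm (.cons hwv q)) where
  length_eq := by simp only [Walk.length_cons, hpq.length_eq]; ring
  mem_support_iff y := by
    have hyw : (y : V) ≠ w := fun h => hwS (h ▸ y.2)
    simp [hyw, hpq.mem_support_iff]
  exists_mem_edges w' hw' hw'S := by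
    simp only [Walk.support_cons, List.mem_cons] at hw'
    rcases hw' with rfl | rfl | hw'
    · exact absurd u.2 hw'S
    · exact ⟨s(u, v), by simp, by simp [hwu, hwv]⟩
    · obtain ⟨e, he, hadj⟩ := hpq.exists_mem_edges w' hw' hw'S
      exact ⟨e, by simp [he], hadj⟩

variable [DecidableRel G.Adj]

lemma eq_or_eq_of_adj (hdeg : ∀ w, #{v ∈ S | G.Adj w v} ≤ 2) {w : V} {x y z : S} (hxy : x ≠ y)
    (hx : G.Adj w x) (hy : G.Adj w y) (hz : G.Adj w z) : z = x ∨ z = y := by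
  by_contra! h
  have hthree : 2 < #{v ∈ S | G.Adj w v} :=
    two_lt_card.2 ⟨x, by simp [hx], y, by simp [hy], z, by simp [hz], by
      simpa only [ne_eq, Subtype.coe_inj] using ⟨hxy, h.1.symm, h.2.symm⟩⟩
  exact (hdeg w).not_gt hthree

lemma IsLift.notMem_support (hdeg : ∀ w, #{v ∈ S | G.Adj w v} ≤ 2) {u v x y : S}
    {p : (variableGraph G S).Walk u v} {q : G.Walk (u : V) v} (hpq : IsLift p q) (hxy : x ≠ y)
    {w : V} (hwS : w ∉ S) (hx : G.Adj w x) (hy : G.Adj w y) (he : s(x, y) ∉ p.edges) :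
    w ∉ q.support := by
  intro hw
  obtain ⟨⟨a, b⟩, hab, hadj⟩ := hpq.exists_mem_edges w hw hwS
  have hne : a ≠ b := (p.adj_of_mem_edges hab).ne
  have ha := eq_or_eq_of_adj hdeg hxy hx hy (hadj a (Sym2.mem_mk_left a b))
  have hb := eq_or_eq_of_adj hdeg hxy hx hy (hadj b (Sym2.mem_mk_right a b))
  refine he (?_ : s(x, y) ∈ p.edges)
  have : s(x, y) = s(a, b) := by grind
  exact this ▸ hab

lemma exists_isPath_isLift (hind : G.IsIndepSet S) (hdeg : ∀ w, #{v ∈ S | G.Adj w v} ≤ 2)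
    {u v : S} (p : (variableGraph G S).Walk u v) (hp : p.IsPath) :
    ∃ q : G.Walk (u : V) v, q.IsPath ∧ IsLift p q := by
  induction p with
  | nil => exact ⟨.nil, .nil, .nil _⟩
  | @cons u v x huv p ih =>
    rw [Walk.cons_isPath_iff] at hp
    obtain ⟨q, hq, hpq⟩ := ih hp.1
    obtain ⟨w, hwu, hwv⟩ := huv.2
    have hwS : w ∉ S := notMem_of_adj_of_isIndepSet hind u.2 hwu
    have hwq : w ∉ q.support := hpq.notMem_support hdeg huv.ne hwS hwu hwv
      fun he => hp.2 (p.fst_mem_support_of_mem_edges he)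
    refine ⟨.cons hwu.symm (.cons hwv q), ?_, hpq.cons huv hwS hwu hwv⟩
    simp [Walk.cons_isPath_iff, hq, hwq, hwu.ne.symm, hpq.mem_support_iff, hp.2]

lemma exists_isCycle_isLift (hind : G.IsIndepSet S) (hdeg : ∀ w, #{v ∈ S | G.Adj w v} ≤ 2)
    {u : S} (c : (variableGraph G S).Walk u u) (hc : c.IsCycle) :
    ∃ c' : G.Walk (u : V) u, c'.IsCycle ∧ IsLift c c' := by
  cases c with
  | nil => exact absurd hc Walk.not_isCycle_nil
  | @cons _ v _ huv p =>
    rw [Walk.cons_isCycle_iff] at hc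
    obtain ⟨q, hq, hpq⟩ := exists_isPath_isLift hind hdeg p hc.1
    obtain ⟨w, hwu, hwv⟩ := huv.2
    have hwS : w ∉ S := notMem_of_adj_of_isIndepSet hind u.2 hwu
    have hwq : w ∉ q.support := hpq.notMem_support hdeg huv.ne hwS hwu hwv hc.2
    refine ⟨.cons hwu.symm (.cons hwv q), ?_, hpq.cons huv hwS hwu hwv⟩
    rw [Walk.cons_isCycle_iff, Walk.cons_isPath_iff, Walk.edges_cons, List.mem_cons, not_or]
    refine ⟨⟨hq, hwq⟩, ?_, fun he => hwq (q.snd_mem_support_of_mem_edges he)⟩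
    have huv' : (u : V) ≠ v := fun h => huv.ne (Subtype.ext h)
    simp [huv', hwu.ne.symm]

lemma egirth_le_two_mul_egirth_variableGraph (hind : G.IsIndepSet S)
    (hdeg : ∀ w, #{v ∈ S | G.Adj w v} ≤ 2) : G.egirth ≤ 2 * (variableGraph G S).egirth := by
  by_cases hacyc : (variableGraph G S).IsAcyclic
  · simp [hacyc.egirth_eq_top]
  obtain ⟨u, c, hc, hlen⟩ := exists_egirth_eq_length.2 hacyc
  obtain ⟨c', hc', hlift⟩ := exists_isCycle_isLift hind hdeg c hc
  calc G.egirth ≤ c'.length := egirth_le_length hc'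
    _ = 2 * (variableGraph G S).egirth := by rw [hlen, hlift.length_eq]; norm_cast

lemma exists_isCycle_hasChord_of_isChord (hind : G.IsIndepSet S)
    (hdeg : ∀ w, #{v ∈ S | G.Adj w v} ≤ 2) {u : S} {c : (variableGraph G S).Walk u u}
    (hc : c.IsCycle) {e : Sym2 S} (he : c.IsChord e) :
    ∃ c' : G.Walk (u : V) u, c'.IsCycle ∧ c'.length = 2 * c.length ∧ HasChord G c' := by
  obtain ⟨c', hc', hlift⟩ := exists_isCycle_isLift hind hdeg c hc
  induction e with
  | h x y =>
    obtain ⟨hxy, hedge, hx, hy⟩ := Walk.isChord_sym2Mk.1 he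
    obtain ⟨w, hwx, hwy⟩ := hxy.2
    have hwS : w ∉ S := notMem_of_adj_of_isIndepSet hind x.2 hwx
    exact ⟨c', hc', hlift.length_eq, .inr ⟨w,
      hlift.notMem_support hdeg hxy.ne hwS hwx hwy hedge,
      x, (hlift.mem_support_iff x).2 hx, y, (hlift.mem_support_iff y).2 hy,
      fun h => hxy.ne (Subtype.ext h), hwx, hwy⟩⟩

end VariableGraph

section DegreeCount

lemma eq_of_common_neighbors {V : Type*} {G : SimpleGraph V} (hg : 4 < G.egirth) {u v w x : V}
    (huv : u ≠ v) (hwu : G.Adj w u) (hwv : G.Adj w v) (hxu : G.Adj x u) (hxv : G.Adj x v) :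
    w = x := by
  by_contra hwx
  let c : G.Walk u u := .cons hwu.symm (.cons hwv (.cons hxv.symm (.cons hxu .nil)))
  have hc : c.IsCycle := by
    have hne : w ≠ u ∧ w ≠ v ∧ x ≠ u ∧ x ≠ v := ⟨hwu.ne, hwv.ne, hxu.ne, hxv.ne⟩
    simp only [c, Walk.cons_isCycle_iff, Walk.isPath_def, Walk.support_cons, Walk.support_nil,
      Walk.edges_cons, Walk.edges_nil, List.nodup_cons, List.mem_cons, List.not_mem_nil,
      Sym2.eq_iff]
    grind
  exact (hg.trans_le (egirth_le_length hc)).ne (by simp [c])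

variable {V : Type*} [DecidableEq V] {G : SimpleGraph V} [DecidableRel G.Adj] [G.LocallyFinite]
  {S : Finset V}

/-- The vertices with exactly one neighbour in `S`: for an elementary trapping set `S` these are
its degree-one check nodes. -/
def uniqueNeighbors (G : SimpleGraph V) [DecidableRel G.Adj] [G.LocallyFinite] (S : Finset V) :
    Finset V :=
  {w ∈ S.biUnion fun v => G.neighborFinset v | #{v ∈ S | G.Adj w v} = 1}

@[simp]
lemma mem_uniqueNeighbors {w : V} : w ∈ uniqueNeighbors G S ↔ #{v ∈ S | G.Adj w v} = 1 := by
  simp only [uniqueNeighbors, mem_filter, mem_biUnion, mem_neighborFinset, and_iff_right_iff_imp]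
  intro h
  obtain ⟨v, hv⟩ := card_pos.1 (h ▸ Nat.one_pos)
  rw [mem_filter] at hv
  exact ⟨v, hv.1, hv.2.symm⟩

lemma map_neighborFinset_variableGraph [DecidableRel (variableGraph G S).Adj] (v : S) :
    ((variableGraph G S).neighborFinset v).map (.subtype _) =
      (G.neighborFinset v).biUnion fun w => ({u ∈ S | G.Adj w u}).erase (v : V) := by
  ext u
  simp only [mem_map, mem_neighborFinset, variableGraph_adj, Function.Embedding.coe_subtype,
    mem_biUnion, mem_erase, mem_filter]
  constructor
  · rintro ⟨u, ⟨hne, w, hwv, hwu⟩, rfl⟩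
    exact ⟨w, hwv.symm, fun h => hne (Subtype.ext h.symm), u.2, hwu⟩
  · rintro ⟨w, hvw, hne, hu, hwu⟩
    exact ⟨⟨u, hu⟩, ⟨fun h => hne (congrArg Subtype.val h).symm, w, hvw.symm, hwu⟩, rfl⟩

lemma degree_variableGraph [DecidableRel (variableGraph G S).Adj] (hg : 4 < G.egirth) (v : S) :
    (variableGraph G S).degree v =
      ∑ w ∈ G.neighborFinset v, #(({u ∈ S | G.Adj w u}).erase (v : V)) := by
  rw [← card_neighborFinset_eq_degree, ← card_map, map_neighborFinset_variableGraph, card_biUnion]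
  intro w hw w' hw' hne
  rw [Function.onFun, Finset.disjoint_left]
  intro u hu hu'
  simp only [mem_erase, mem_filter, mem_coe, mem_neighborFinset] at hw hw' hu hu'
  exact hne (eq_of_common_neighbors hg hu.1 hu.2.2 hw.symm hu'.2.2 hw'.symm)

lemma degree_variableGraph_add_card_uniqueNeighbors [DecidableRel (variableGraph G S).Adj]
    (hg : 4 < G.egirth) (hdeg : ∀ w, #{v ∈ S | G.Adj w v} ≤ 2) (v : S) :
    (variableGraph G S).degree v + #{w ∈ uniqueNeighbors G S | G.Adj w v} = G.degree v := by
  have hunique : {w ∈ uniqueNeighbors G S | G.Adj w v} =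
      {w ∈ G.neighborFinset v | #{u ∈ S | G.Adj w u} = 1} := by
    ext w
    simp [and_comm, G.adj_comm w]
  rw [degree_variableGraph hg, hunique, card_filter, ← sum_add_distrib,
    ← card_neighborFinset_eq_degree, card_eq_sum_ones]
  refine sum_congr rfl fun w hw => ?_
  have hv : (v : V) ∈ {u ∈ S | G.Adj w u} := by
    simpa [G.adj_comm w] using hw
  have hcard := card_erase_add_one hv
  have hle := hdeg w
  split_ifs <;> omega

lemma sum_degree_variableGraph_add_card_uniqueNeighbors [DecidableRel (variableGraph G S).Adj]
    (hg : 4 < G.egirth) (hdeg : ∀ w, #{v ∈ S | G.Adj w v} ≤ 2) :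
    ∑ v, (variableGraph G S).degree v + #(uniqueNeighbors G S) = ∑ v ∈ S, G.degree v := by
  have hdouble : ∑ v ∈ S, #{w ∈ uniqueNeighbors G S | G.Adj w v} = #(uniqueNeighbors G S) := by
    refine (sum_card_bipartiteAbove_eq_sum_card_bipartiteBelow G.Adj).symm.trans ?_
    rw [card_eq_sum_ones]
    exact sum_congr rfl fun w hw => mem_uniqueNeighbors.1 hw
  rw [← hdouble, ← sum_coe_sort S, ← sum_coe_sort S, ← sum_add_distrib]
  exact sum_congr rfl fun v _ => degree_variableGraph_add_card_uniqueNeighbors hg hdeg v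

end DegreeCount

section ChordlessHexagons

lemma card_add_card_add_card_le_card_union_add {α : Type*} [DecidableEq α] {X Y Z : Finset α}
    {k : ℕ} (hXY : #(X ∩ Y) ≤ k) (hYZ : #(Y ∩ Z) ≤ k) (hXZ : #(X ∩ Z) ≤ k)
    (hXYZ : X ∩ Y = ∅ ∨ Y ∩ Z = ∅) (hYXZ : X ∩ Y = ∅ ∨ X ∩ Z = ∅) (hXZY : X ∩ Z = ∅ ∨ Y ∩ Z = ∅) :
    #X + #Y + #Z ≤ #(X ∪ Y ∪ Z) + k := by
  have hunion := card_union_add_card_inter X Y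
  have hunion₃ := card_union_add_card_inter (X ∪ Y) Z
  have hinter : #((X ∪ Y) ∩ Z) ≤ #(X ∩ Z) + #(Y ∩ Z) := by
    rw [union_inter_distrib_right]
    exact card_union_le _ _
  simp only [← card_eq_zero] at hXYZ hYXZ hXZY
  omega

/-- Every 6-cycle of `H` is an induced cycle. For the variable graph of a Tanner graph this is what
remains of the chordlessness of the 12-cycles. -/
def ChordlessHexagons {U : Type*} (H : SimpleGraph U) : Prop :=
  ∀ ⦃v : U⦄ (c : H.Walk v v), c.IsCycle → c.length = 6 → c.IsChordless

variable {U : Type*} {H : SimpleGraph U}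

lemma eq_of_common_neighbors_of_chordlessHexagons (hT : H.CliqueFree 3) (hC : ChordlessHexagons H)
    {v x y z p q : U} (hx : H.Adj v x) (hy : H.Adj v y) (hz : H.Adj v z) (hxy : x ≠ y)
    (hyz : y ≠ z) (hxz : x ≠ z) (hp : p ≠ v) (hq : q ≠ v) (hxp : H.Adj x p) (hyp : H.Adj y p)
    (hyq : H.Adj y q) (hzq : H.Adj z q) : p = q := by
  classical
  by_contra hpq
  let c : H.Walk v v :=
    .cons hx (.cons hxp (.cons hyp.symm (.cons hyq (.cons hzq.symm (.cons hz.symm .nil)))))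
  have htri : ∀ {a b}, H.Adj v a → H.Adj v b → ¬H.Adj a b := fun ha hb hab =>
    isIndepSet_neighborSet_of_triangleFree H hT v ha hb hab.ne hab
  have hxq : x ≠ q := by rintro rfl; exact htri hz hx hzq
  have hpz : p ≠ z := by rintro rfl; exact htri hx hz hxp
  have hnodup : [v, x, p, y, q, z].Nodup := by
    simp [hx.ne, hy.ne, hz.ne, hxp.ne, hyp.ne', hyq.ne, hzq.ne', hp.symm, hq.symm, hxy, hyz, hxz,
      hpq, hxq, hpz]
  have hc : c.IsCycle := by
    simp only [c, Walk.cons_isCycle_iff, Walk.isPath_def, Walk.support_cons, Walk.support_nil,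
      Walk.edges_cons, Walk.edges_nil, List.nodup_cons, List.mem_cons, List.not_mem_nil,
      Sym2.eq_iff] at hnodup ⊢
    grind
  have hchord : s(v, y) ∉ c.edges := by
    simp only [c, Walk.edges_cons, Walk.edges_nil, List.mem_cons, List.not_mem_nil, Sym2.eq_iff]
    grind
  exact hchord ((hC c hc rfl).mem_edges (by simp [c]) (by simp [c]) hy)

variable [Fintype U] [DecidableEq U] [DecidableRel H.Adj]

lemma card_biUnion_neighborFinset_add_degree_le (hT : H.CliqueFree 3) (v : U) :
    #((H.neighborFinset v).biUnion fun u => H.neighborFinset u) + H.degree v ≤ Fintype.card U := by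
  rw [← card_neighborFinset_eq_degree, ← card_union_of_disjoint]
  · exact card_le_univ _
  rw [Finset.disjoint_left]
  intro w hw hvw
  simp only [mem_biUnion, mem_neighborFinset] at hw hvw
  obtain ⟨u, hvu, huw⟩ := hw
  exact isIndepSet_neighborSet_of_triangleFree H hT v hvu hvw huw.ne huw

/-- The neighbours of `u` other than `v`: where a non-backtracking walk can go after stepping from
`v` to `u`. -/
def forwardNeighbors (H : SimpleGraph U) [DecidableRel H.Adj] (v u : U) : Finset U :=
  (H.neighborFinset u).erase v

@[simp]
lemma mem_forwardNeighbors {u v w : U} : w ∈ forwardNeighbors H v u ↔ w ≠ v ∧ H.Adj u w := by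
  simp [forwardNeighbors]

lemma card_forwardNeighbors_add_one {u v : U} (hvu : H.Adj v u) :
    #(forwardNeighbors H v u) + 1 = H.degree u := by
  rw [forwardNeighbors, card_erase_add_one (by simpa using hvu.symm), card_neighborFinset_eq_degree]

lemma sum_degree_neighborFinset_lt_card_add (hT : H.CliqueFree 3) {v x y z : U} {k : ℕ}
    (hxy : x ≠ y) (hyz : y ≠ z) (hxz : x ≠ z) (hN : H.neighborFinset v = {x, y, z})
    (hk : #(forwardNeighbors H v x) + #(forwardNeighbors H v y) + #(forwardNeighbors H v z) ≤
      #(forwardNeighbors H v x ∪ forwardNeighbors H v y ∪ forwardNeighbors H v z) + k) :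
    ∑ u ∈ H.neighborFinset v, H.degree u < Fintype.card U + k := by
  have hadj : ∀ u, u = x ∨ u = y ∨ u = z → H.Adj v u := fun u hu => by
    rw [← mem_neighborFinset, hN]
    simpa using hu
  have hx := card_forwardNeighbors_add_one (hadj x (by simp))
  have hy := card_forwardNeighbors_add_one (hadj y (by simp))
  have hz := card_forwardNeighbors_add_one (hadj z (by simp))
  have hsecond := card_biUnion_neighborFinset_add_degree_le hT v
  have hv : v ∈ (H.neighborFinset v).biUnion fun u => H.neighborFinset u :=
    mem_biUnion.2 ⟨x, by simp [hN], by simpa using (hadj x (by simp)).symm⟩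
  have hunion : ((H.neighborFinset v).biUnion fun u => H.neighborFinset u).erase v =
      forwardNeighbors H v x ∪ forwardNeighbors H v y ∪ forwardNeighbors H v z := by
    simp only [hN, biUnion_insert, singleton_biUnion, erase_union_distrib, union_assoc,
      forwardNeighbors]
  have hdeg : H.degree v = 3 := by
    rw [← card_neighborFinset_eq_degree, hN, card_eq_three]
    exact ⟨x, y, z, hxy, hxz, hyz, rfl⟩
  rw [← card_erase_add_one hv, hunion] at hsecond
  rw [hN, sum_insert (by simp [hxy, hxz]), sum_pair hyz]
  omega

lemma forwardNeighbors_inter_eq_empty_or (hT : H.CliqueFree 3) (hC : ChordlessHexagons H)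
    {v x y z : U} (hx : H.Adj v x) (hy : H.Adj v y) (hz : H.Adj v z) (hxy : x ≠ y) (hyz : y ≠ z)
    (hxz : x ≠ z) (hK : ∀ w ≠ v, ¬(H.Adj x w ∧ H.Adj y w ∧ H.Adj z w)) :
    forwardNeighbors H v x ∩ forwardNeighbors H v y = ∅ ∨
      forwardNeighbors H v y ∩ forwardNeighbors H v z = ∅ := by
  by_contra! h
  obtain ⟨⟨p, hp⟩, ⟨q, hq⟩⟩ := h
  simp only [mem_inter, mem_forwardNeighbors] at hp hq
  have hpq : p = q := eq_of_common_neighbors_of_chordlessHexagons hT hC hx hy hz hxy hyz hxz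
    hp.1.1 hq.1.1 hp.1.2 hp.2.2 hq.1.2 hq.2.2
  exact hK p hp.1.1 ⟨hp.1.2, hp.2.2, hpq ▸ hq.2.2⟩

lemma sum_degree_neighborFinset_lt_of_no_common_neighbor (hT : H.CliqueFree 3)
    (hC : ChordlessHexagons H) {v : U} {k : ℕ} (hv : H.degree v = 3)
    (hK : ∀ w ≠ v, ¬H.neighborFinset v ⊆ H.neighborFinset w)
    (hk : ∀ x ∈ H.neighborFinset v, ∀ y ∈ H.neighborFinset v, x ≠ y →
      #(forwardNeighbors H v x ∩ forwardNeighbors H v y) ≤ k) :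
    ∑ u ∈ H.neighborFinset v, H.degree u < Fintype.card U + k := by
  obtain ⟨x, y, z, hxy, hxz, hyz, hN⟩ := card_eq_three.1
    ((card_neighborFinset_eq_degree H v).trans hv)
  have hK' : ∀ w ≠ v, ¬(H.Adj x w ∧ H.Adj y w ∧ H.Adj z w) := fun w hw h => hK w hw <| by
    simp [hN, insert_subset_iff, h.1.symm, h.2.1.symm, h.2.2.symm]
  have hx : x ∈ H.neighborFinset v := by simp [hN]
  have hy : y ∈ H.neighborFinset v := by simp [hN]
  have hz : z ∈ H.neighborFinset v := by simp [hN]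
  have hvx := (H.mem_neighborFinset v x).1 hx
  have hvy := (H.mem_neighborFinset v y).1 hy
  have hvz := (H.mem_neighborFinset v z).1 hz
  refine sum_degree_neighborFinset_lt_card_add hT hxy hyz hxz hN
    (card_add_card_add_card_le_card_union_add (hk x hx y hy hxy) (hk y hy z hz hyz)
      (hk x hx z hz hxz) ?_ ?_ ?_)
  · exact forwardNeighbors_inter_eq_empty_or hT hC hvx hvy hvz hxy hyz hxz hK'
  · rw [inter_comm]
    exact forwardNeighbors_inter_eq_empty_or hT hC hvy hvx hvz hxy.symm hxz hyz
      fun w hw h => hK' w hw ⟨h.2.1, h.1, h.2.2⟩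
  · rw [inter_comm (forwardNeighbors H v y)]
    exact forwardNeighbors_inter_eq_empty_or hT hC hvx hvz hvy hxz hyz.symm hxy
      fun w hw h => hK' w hw ⟨h.1, h.2.2, h.2.1⟩

lemma forwardNeighbors_inter_eq_singleton (hT : H.CliqueFree 3) (hC : ChordlessHexagons H)
    {v w x y z : U} (hvw : w ≠ v) (hx : H.Adj v x) (hy : H.Adj v y) (hz : H.Adj v z) (hxy : x ≠ y)
    (hyz : y ≠ z) (hxz : x ≠ z) (hxw : H.Adj x w) (hyw : H.Adj y w) (hzw : H.Adj z w) :
    forwardNeighbors H v x ∩ forwardNeighbors H v y = {w} := by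
  refine eq_singleton_iff_unique_mem.2 ⟨by simp [hvw, hxw, hyw], fun p hp => ?_⟩
  simp only [mem_inter, mem_forwardNeighbors] at hp
  exact eq_of_common_neighbors_of_chordlessHexagons hT hC hx hy hz hxy hyz hxz hp.1.1 hvw hp.1.2
    hp.2.2 hyw hzw

omit [DecidableEq U] in
lemma sum_degree_neighborFinset_lt_of_common_neighbor (hT : H.CliqueFree 3)
    (hC : ChordlessHexagons H) {v w : U} (hv : H.degree v = 3) (hvw : w ≠ v)
    (hsub : H.neighborFinset v ⊆ H.neighborFinset w) :
    ∑ u ∈ H.neighborFinset v, H.degree u < Fintype.card U + 2 := by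
  classical
  obtain ⟨x, y, z, hxy, hxz, hyz, hN⟩ := card_eq_three.1
    ((card_neighborFinset_eq_degree H v).trans hv)
  have hvadj : ∀ u ∈ H.neighborFinset v, H.Adj v u := fun u => (H.mem_neighborFinset v u).1
  have hwadj : ∀ u ∈ H.neighborFinset v, H.Adj u w := fun u hu => by
    simpa [H.adj_comm] using hsub hu
  simp only [hN, mem_insert, mem_singleton, forall_eq_or_imp, forall_eq] at hvadj hwadj
  obtain ⟨hvx, hvy, hvz⟩ := hvadj
  obtain ⟨hxw, hyw, hzw⟩ := hwadj
  have hXY := forwardNeighbors_inter_eq_singleton hT hC hvw hvx hvy hvz hxy hyz hxz hxw hyw hzw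
  have hXZ := forwardNeighbors_inter_eq_singleton hT hC hvw hvx hvz hvy hxz hyz.symm hxy hxw hzw hyw
  have hYZ := forwardNeighbors_inter_eq_singleton hT hC hvw hvy hvz hvx hyz hxz.symm hxy.symm hyw
    hzw hxw
  refine sum_degree_neighborFinset_lt_card_add hT hxy hyz hxz hN ?_
  have hunion := card_union_add_card_inter (forwardNeighbors H v x) (forwardNeighbors H v y)
  have hunion₃ := card_union_add_card_inter
    (forwardNeighbors H v x ∪ forwardNeighbors H v y) (forwardNeighbors H v z)
  rw [hXY, card_singleton] at hunion
  rw [union_inter_distrib_right, hXZ, hYZ, union_self, card_singleton] at hunion₃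
  omega

omit [DecidableEq U] in
lemma sum_degree_neighborFinset_lt_card_add_two (hT : H.CliqueFree 3) (hC : ChordlessHexagons H)
    (hd : ∀ u, H.degree u ≤ 3) {v : U} (hv : H.degree v = 3) :
    ∑ u ∈ H.neighborFinset v, H.degree u < Fintype.card U + 2 := by
  classical
  by_cases! hK : ∃ w ≠ v, H.neighborFinset v ⊆ H.neighborFinset w
  · obtain ⟨w, hvw, hsub⟩ := hK
    exact sum_degree_neighborFinset_lt_of_common_neighbor hT hC hv hvw hsub
  refine sum_degree_neighborFinset_lt_of_no_common_neighbor hT hC hv hK fun x hx y _ _ => ?_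
  have hcard := card_forwardNeighbors_add_one ((H.mem_neighborFinset v x).1 hx)
  grw [inter_subset_left]
  have hdx := hd x
  omega

lemma sum_degree_neighborFinset_le_card (hT : H.CliqueFree 3) (hC : ChordlessHexagons H)
    (hK : ∀ u v, u ≠ v → #(H.neighborFinset u ∩ H.neighborFinset v) ≤ 2) {v : U}
    (hv : H.degree v = 3) : ∑ u ∈ H.neighborFinset v, H.degree u ≤ Fintype.card U := by
  refine Nat.lt_add_one_iff.1
    (sum_degree_neighborFinset_lt_of_no_common_neighbor hT hC (k := 1) hv ?_ ?_)
  · intro w hvw hsub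
    have hle := hK v w hvw.symm
    rw [inter_eq_left.2 hsub, card_neighborFinset_eq_degree] at hle
    omega
  · intro x hx y hy hxy
    have hvxy : v ∈ H.neighborFinset x ∩ H.neighborFinset y := by
      simpa [H.adj_comm v] using And.intro hx hy
    rw [forwardNeighbors, forwardNeighbors,
      erase_inter, inter_erase, erase_idem, card_erase_of_mem hvxy]
    have hcodeg := hK x y hxy
    omega

end ChordlessHexagons

section Cubic

variable {U : Type*} {H : SimpleGraph U} [Fintype U] [DecidableEq U] [DecidableRel H.Adj]

lemma card_compl_pair_union_neighborFinset_add {u v : U} (huv : u ≠ v)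
    (hN : H.neighborFinset u = H.neighborFinset v) :
    #({u, v} ∪ H.neighborFinset u)ᶜ + (H.degree u + 2) = Fintype.card U := by
  have hdisj : Disjoint {u, v} (H.neighborFinset u) := by
    simpa [H.adj_comm u] using congrArg (v ∈ ·) hN
  rw [← card_compl_add_card ({u, v} ∪ H.neighborFinset u), card_union_of_disjoint hdisj,
    card_pair huv, card_neighborFinset_eq_degree, add_comm 2]

lemma degree_add_two_le_card_inter_add_card_compl {u v p q : U}
    (hN : H.neighborFinset u = H.neighborFinset v) (hp : p ∈ ({u, v} ∪ H.neighborFinset u)ᶜ)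
    (hq : q ∈ ({u, v} ∪ H.neighborFinset u)ᶜ) (hpq : p ≠ q) (hadj : ¬H.Adj p q) :
    H.degree p + 2 ≤ #(H.neighborFinset p ∩ H.neighborFinset u) +
      #({u, v} ∪ H.neighborFinset u)ᶜ := by
  have hpu : ¬H.Adj u p := fun h => by simp [h] at hp
  have hpv : ¬H.Adj v p := fun h => by simp [hN, h] at hp
  have hsdiff : H.neighborFinset p \ H.neighborFinset u ⊆
      ({u, v} ∪ H.neighborFinset u)ᶜ \ {p, q} := by
    intro w hw
    have hwp : w ≠ p := by rintro rfl; simp at hw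
    have hwq : w ≠ q := by rintro rfl; simp [hadj] at hw
    have hwu : w ≠ u := by rintro rfl; simp [H.adj_comm p, hpu] at hw
    have hwv : w ≠ v := by rintro rfl; simp [H.adj_comm p, hpv] at hw
    simp_all
  have hpair : {p, q} ⊆ ({u, v} ∪ H.neighborFinset u)ᶜ := insert_subset hp (by simpa using hq)
  have hcompl := card_sdiff_add_card_eq_card hpair
  rw [card_pair hpq] at hcompl
  rw [← card_neighborFinset_eq_degree, ← card_inter_add_card_sdiff _ (H.neighborFinset u),
    add_assoc, ← hcompl]
  gcongr

lemma adj_of_neighborFinset_eq (hd : ∀ u, H.degree u = 3) (hcard : Fintype.card U = 8)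
    {u v p q : U} (huv : u ≠ v) (hN : H.neighborFinset u = H.neighborFinset v)
    (hp : p ∈ ({u, v} ∪ H.neighborFinset u)ᶜ) (hq : q ∈ ({u, v} ∪ H.neighborFinset u)ᶜ)
    (hpq : p ≠ q) : H.Adj p q := by
  by_contra hadj
  have hcompl := card_compl_pair_union_neighborFinset_add huv hN
  have hpT := degree_add_two_le_card_inter_add_card_compl hN hp hq hpq hadj
  have hqT := degree_add_two_le_card_inter_add_card_compl hN hq hp hpq.symm (mt H.adj_symm hadj)
  have hdisj : Disjoint (H.neighborFinset p ∩ H.neighborFinset u)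
      (H.neighborFinset q ∩ H.neighborFinset u) := by
    rw [Finset.disjoint_left]
    intro t htp htq
    have hsub : {u, v, p, q} ⊆ H.neighborFinset t := by
      have htu : H.Adj u t := by simpa using (mem_inter.1 htp).2
      have htv : H.Adj v t := by simpa [hN] using (mem_inter.1 htp).2
      simp only [mem_inter, mem_neighborFinset] at htp htq
      simp [insert_subset_iff, htu.symm, htv.symm, htp.1.symm, htq.1.symm]
    have hfour : #{u, v, p, q} = 4 := by
      simp only [mem_compl, mem_union, mem_insert, mem_singleton, not_or] at hp hq
      grind
    have hle := card_le_card hsub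
    rw [card_neighborFinset_eq_degree, hd] at hle
    omega
  have hunion := card_union_of_disjoint hdisj
  have hle := card_le_card (union_subset inter_subset_right inter_subset_right :
    H.neighborFinset p ∩ H.neighborFinset u ∪ H.neighborFinset q ∩ H.neighborFinset u ⊆ _)
  rw [card_neighborFinset_eq_degree] at hle
  rw [hd] at hcompl hpT hqT hle
  omega

lemma card_inter_neighborFinset_le_two (hT : H.CliqueFree 3) (hd : ∀ u, H.degree u = 3)
    (hcard : Fintype.card U = 8) {u v : U} (huv : u ≠ v) :
    #(H.neighborFinset u ∩ H.neighborFinset v) ≤ 2 := by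
  by_contra! h
  have hu : H.neighborFinset u ∩ H.neighborFinset v = H.neighborFinset u :=
    eq_of_subset_of_card_le inter_subset_left (by simpa [hd] using Nat.succ_le_of_lt h)
  have hv : H.neighborFinset u ∩ H.neighborFinset v = H.neighborFinset v :=
    eq_of_subset_of_card_le inter_subset_right (by simpa [hd] using Nat.succ_le_of_lt h)
  have hN := hu.symm.trans hv
  have hcompl := card_compl_pair_union_neighborFinset_add huv hN
  exact hT ({u, v} ∪ H.neighborFinset u)ᶜ
    ⟨fun p hp q hq hpq => adj_of_neighborFinset_eq hd hcard huv hN hp hq hpq, by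
      rw [hd] at hcompl; omega⟩

omit [DecidableEq U] in
lemma nine_le_card_of_cubic [Nonempty U] (hT : H.CliqueFree 3) (hC : ChordlessHexagons H)
    (hd : ∀ u, H.degree u = 3) : 9 ≤ Fintype.card U := by
  classical
  obtain ⟨v⟩ := ‹Nonempty U›
  have hsum : ∑ u ∈ H.neighborFinset v, H.degree u = 9 := by simp [hd]
  have hlt := sum_degree_neighborFinset_lt_card_add_two hT hC (fun u => (hd u).le) (hd v)
  rw [hsum] at hlt
  by_contra! hlt9
  have hcard : Fintype.card U = 8 := by omega
  have hle := sum_degree_neighborFinset_le_card hT hC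
    (fun u v => card_inter_neighborFinset_le_two hT hd hcard) (hd v)
  omega

end Cubic

section Deficiency

variable {U : Type*} {H : SimpleGraph U} [Fintype U] [DecidableRel H.Adj]

lemma mul_card_le_sum_degree_add {k b : ℕ} (hd : ∀ u, H.degree u ≤ k)
    (hb : ∑ u, H.degree u + b = k * Fintype.card U) (s : Finset U) :
    k * #s ≤ ∑ u ∈ s, H.degree u + b := by
  classical
  have hcompl : ∑ u ∈ sᶜ, H.degree u ≤ #sᶜ * k := sum_le_card_nsmul _ _ _ fun u _ => hd u
  rw [← card_add_card_compl s, ← sum_add_sum_compl s] at hb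
  linarith

lemma card_filter_degree_lt_le {k b : ℕ} (hd : ∀ u, H.degree u ≤ k)
    (hb : ∑ u, H.degree u + b = k * Fintype.card U) : #{u | H.degree u < k} ≤ b := by
  have hle := mul_card_le_sum_degree_add hd hb {u | H.degree u < k}
  have hsum : ∑ u with H.degree u < k, (H.degree u + 1) ≤ #{u | H.degree u < k} * k :=
    sum_le_card_nsmul _ _ _ fun u hu => (mem_filter.1 hu).2
  rw [sum_add_distrib, ← card_eq_sum_ones] at hsum
  linarith

lemma card_le_card_filter_degree_eq_add {k b : ℕ} (hd : ∀ u, H.degree u ≤ k)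
    (hb : ∑ u, H.degree u + b = k * Fintype.card U) :
    Fintype.card U ≤ #{u | H.degree u = k} + b := by
  have hsplit := card_filter_add_card_filter_not (s := univ) fun u => H.degree u = k
  have hlt := card_filter_degree_lt_le hd hb
  simp only [fun u => (hd u).lt_iff_ne, ne_eq] at hlt
  rw [card_univ] at hsplit
  omega

lemma eight_le_card_add_of_chordlessHexagons {b : ℕ} (hT : H.CliqueFree 3)
    (hC : ChordlessHexagons H) (hd : ∀ u, H.degree u ≤ 3)
    (hb : ∑ u, H.degree u + b = 3 * Fintype.card U) (hbU : b < Fintype.card U) :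
    8 ≤ Fintype.card U + b := by
  have hfull := card_le_card_filter_degree_eq_add hd hb
  obtain ⟨v, hv⟩ : ({u | H.degree u = 3} : Finset U).Nonempty := card_pos.1 (by omega)
  rw [mem_filter_univ] at hv
  have hlt := sum_degree_neighborFinset_lt_card_add_two hT hC hd hv
  have hle := mul_card_le_sum_degree_add hd hb (H.neighborFinset v)
  rw [card_neighborFinset_eq_degree, hv] at hle
  omega

lemma nine_le_card_add_of_exists_degree_lt {b : ℕ} (hT : H.CliqueFree 3)
    (hC : ChordlessHexagons H) (hd : ∀ u, H.degree u ≤ 3)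
    (hb : ∑ u, H.degree u + b = 3 * Fintype.card U) (hbU : b + 3 ≤ Fintype.card U)
    {w : U} (hw : H.degree w < 3) : 9 ≤ Fintype.card U + b := by
  classical
  have hfull := card_le_card_filter_degree_eq_add hd hb
  obtain ⟨v, hv, hwv⟩ : ∃ v ∈ ({u | H.degree u = 3} : Finset U), v ∉ H.neighborFinset w :=
    exists_mem_notMem_of_card_lt_card (by rw [card_neighborFinset_eq_degree]; omega)
  rw [mem_filter_univ] at hv
  have hwN : w ∉ H.neighborFinset v := by simpa [H.adj_comm w] using hwv
  have hlt := sum_degree_neighborFinset_lt_card_add_two hT hC hd hv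
  have hle := mul_card_le_sum_degree_add hd hb (insert w (H.neighborFinset v))
  rw [card_insert_of_notMem hwN, sum_insert hwN, card_neighborFinset_eq_degree, hv] at hle
  omega

lemma even_card_add_of_sum_degree_add_eq {b : ℕ} (hb : ∑ u, H.degree u + b = 3 * Fintype.card U) :
    Even (Fintype.card U + b) := by
  rw [H.sum_degrees_eq_twice_card_edges] at hb
  rw [Nat.even_iff]
  omega

lemma ten_le_card_add_of_chordlessHexagons {b : ℕ} (hT : H.CliqueFree 3) (hC : ChordlessHexagons H)
    (hd : ∀ u, H.degree u ≤ 3) (hb : ∑ u, H.degree u + b = 3 * Fintype.card U)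
    (hb2 : b ≤ 2) (hbU : b < Fintype.card U) : 10 ≤ Fintype.card U + b := by
  have hn_eight := eight_le_card_add_of_chordlessHexagons hT hC hd hb hbU
  have heven := even_card_add_of_sum_degree_add_eq hb
  suffices 9 ≤ Fintype.card U + b by
    rw [Nat.even_iff] at heven
    omega
  by_cases! hcubic : ∃ w, H.degree w < 3
  · obtain ⟨w, hw⟩ := hcubic
    exact nine_le_card_add_of_exists_degree_lt hT hC hd hb (by omega) hw
  · have : Nonempty U := Fintype.card_pos_iff.1 (by omega)
    exact (nine_le_card_of_cubic hT hC fun u => (hd u).antisymm (hcubic u)).trans (by omega)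

end Deficiency

section TrappingSet

variable {V : Type*} {G : SimpleGraph V} [DecidableRel G.Adj] {S : Finset V}

lemma cliqueFree_three_variableGraph (hg : 8 ≤ G.egirth) (hind : G.IsIndepSet S)
    (hdeg : ∀ w, #{v ∈ S | G.Adj w v} ≤ 2) : (variableGraph G S).CliqueFree 3 := by
  intro s hs
  obtain ⟨u, c, hc, hlen⟩ := is3Clique_iff_exists_cycle_length_three.1 ⟨s, hs⟩
  have hle : (8 : ℕ∞) ≤ 2 * (3 : ℕ) := calc
    8 ≤ G.egirth := hg
    _ ≤ 2 * (variableGraph G S).egirth := egirth_le_two_mul_egirth_variableGraph hind hdeg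
    _ ≤ 2 * (3 : ℕ) := by gcongr; exact hlen ▸ egirth_le_length hc
  norm_cast at hle

lemma chordlessHexagons_variableGraph (hind : G.IsIndepSet S)
    (hdeg : ∀ w, #{v ∈ S | G.Adj w v} ≤ 2)
    (hchord : ∀ (v : V) (c : G.Walk v v), c.IsCycle → c.length = 12 → ¬HasChord G c) :
    ChordlessHexagons (variableGraph G S) := by
  intro u c hc hlen e he
  obtain ⟨c', hc', hlen', hhas⟩ := exists_isCycle_hasChord_of_isChord hind hdeg hc he
  exact hchord u c' hc' (by rw [hlen', hlen]) hhas

lemma card_filter_adj_le_of_forall_notMem {X : Set V} (hind : G.IsIndepSet X)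
    (hSX : (S : Set V) ⊆ X) {k : ℕ} (hdeg : ∀ w ∉ X, #{v ∈ S | G.Adj w v} ≤ k) (w : V) :
    #{v ∈ S | G.Adj w v} ≤ k := by
  by_cases hw : w ∈ X
  · rw [filter_false_of_mem fun v hv hwv => notMem_of_adj_of_isIndepSet hind (hSX hv) hwv hw]
    exact Nat.zero_le _
  · exact hdeg w hw

lemma uniqueNeighbors_eq_filter_notMem [Fintype V] [DecidableEq V] {X : Set V}
    [DecidablePred (· ∈ X)] (hind : G.IsIndepSet X) (hSX : (S : Set V) ⊆ X) :
    uniqueNeighbors G S = ({w | w ∉ X ∧ #{v ∈ S | G.Adj w v} = 1} : Finset V) := by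
  ext w
  rw [mem_filter_univ, mem_uniqueNeighbors, iff_and_self]
  intro hw
  obtain ⟨v, hv⟩ := card_pos.1 (hw ▸ Nat.one_pos)
  rw [mem_filter] at hv
  exact notMem_of_adj_of_isIndepSet hind (hSX hv.1) hv.2

end TrappingSet

theorem stmt_14_general {V : Type*} [DecidableEq V] (G : SimpleGraph V) [DecidableRel G.Adj]
    [G.LocallyFinite] (hg : 8 ≤ G.egirth)
    (hchord : ∀ (v : V) (c : G.Walk v v), c.IsCycle → c.length = 12 → ¬HasChord G c)
    (S : Finset V) (hind : G.IsIndepSet S) (hdegS : ∀ v ∈ S, G.degree v = 3)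
    (hets : ∀ w, #{v ∈ S | G.Adj w v} ≤ 2) (b : ℕ) (hb : b = #(uniqueNeighbors G S))
    (hbS : b < #S) :
    (b = 0 → 10 ≤ #S) ∧ (b = 1 → 9 ≤ #S) ∧ (b = 2 → 8 ≤ #S) ∧ (b = 3 → 5 ≤ #S) := by
  classical
  have hg4 : 4 < G.egirth := lt_of_lt_of_le (by norm_num) hg
  have hd : ∀ v, (variableGraph G S).degree v ≤ 3 := fun v =>
    hdegS v v.2 ▸ degree_variableGraph_add_card_uniqueNeighbors hg4 hets v ▸ Nat.le_add_right _ _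
  have hsum : ∑ v, (variableGraph G S).degree v + b = 3 * Fintype.card S := by
    rw [hb, sum_degree_variableGraph_add_card_uniqueNeighbors hg4 hets, sum_congr rfl hdegS]
    simp [mul_comm]
  have hten := ten_le_card_add_of_chordlessHexagons (cliqueFree_three_variableGraph hg hind hets)
    (chordlessHexagons_variableGraph hind hets hchord) hd hsum
  have heven := Nat.even_iff.1 (even_card_add_of_sum_degree_add_eq hsum)
  rw [Fintype.card_coe] at hten heven
  omega

/-- In a variable-regular Tanner graph with column weight 3, girth (at least) 8, and
all cycles of length up to 12 chordless, every `(a,b)` elementary trapping set with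
`b < a` satisfies: `a ≥ 10` if `b = 0`, `a ≥ 9` if `b = 1`, `a ≥ 8` if `b = 2`, and
`a ≥ 5` if `b = 3`. -/
theorem stmt_14 {V : Type*} [Fintype V] [DecidableEq V]
    (G : SimpleGraph V) [DecidableRel G.Adj]
    (isVar : V → Prop) [DecidablePred isVar]
    (hbip : ∀ x y, G.Adj x y → (isVar x ↔ ¬ isVar y))
    (hdegV : ∀ v, isVar v → G.degree v = 3)
    (hg : (8 : ℕ∞) ≤ G.girth)
    (hchord : ∀ (v : V) (c : G.Walk v v), c.IsCycle → c.length ≤ 12 → ¬ HasChord G c)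
    (S : Finset V) (hSvar : ∀ v ∈ S, isVar v)
    (hets : ∀ w, ¬ isVar w → (S.filter (fun v => G.Adj w v)).card ≤ 2)
    (a b : ℕ) (ha : a = S.card)
    (hb : b = (univ.filter (fun w =>
      ¬ isVar w ∧ (S.filter (fun v => G.Adj w v)).card = 1)).card)
    (hba : b < a) :
    (b = 0 → 10 ≤ a) ∧ (b = 1 → 9 ≤ a) ∧ (b = 2 → 8 ≤ a) ∧ (b = 3 → 5 ≤ a) := by
  have hind : G.IsIndepSet {v | isVar v} := fun u hu v hv _ huv => (hbip u v huv).1 hu hv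
  have hunique := congrArg card (uniqueNeighbors_eq_filter_notMem hind hSvar)
  subst ha
  exact stmt_14_general G (hg.trans (ENat.natCast_toNat_le_self _))
    (fun v c hc hlen => hchord v c hc hlen.le) S (hind.mono hSvar)
    (fun v hv => hdegV v (hSvar v hv)) (card_filter_adj_le_of_forall_notMem hind hSvar hets) b
    (hb.trans hunique.symm) hba
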